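/- In the KP tau-function setting, for all integers k, l and at every point of ℝ⁷, the tau function τ⁽⁰⁾ satisfies the bilinear Toda-type identity 2(∂_{x₋₁⁽¹⁾}∂_{x₁}τ_{k,l}⁽⁰⁾·τ_{k,l}⁽⁰⁾ − ∂_{x₋₁⁽¹⁾}τ_{k,l}⁽⁰⁾·∂_{x₁}τ_{k,l}⁽⁰⁾) − 2(τ_{k,l}⁽⁰⁾)² = −2τ_{k+1,l}⁽⁰⁾·τ_{k−1,l}⁽⁰⁾, i.e., the equation (D_{x₋₁⁽¹⁾}D_{x₁} − 2)τ_{k,l}⁽⁰⁾·τ_{k,l}⁽⁰⁾ = −2τ_{k+1,l}⁽⁰⁾τ_{k−1,l}⁽⁰⁾ holds. -/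

import Mathlib

open Complex Matrix

noncomputable section

/-- Partial derivative of a function on `ℝ⁷` in the `i`-th coordinate direction.
Coordinates: `0 ↦ x₁`, `1 ↦ x₂`, `2 ↦ x₃`, `3 ↦ x₋₁⁽¹⁾`, `4 ↦ x₋₁⁽²⁾`,
`5 ↦ y₁⁽¹⁾`, `6 ↦ y₁⁽²⁾`. -/
def pd (i : Fin 7) (f : (Fin 7 → ℝ) → ℂ) : (Fin 7 → ℝ) → ℂ :=
  fun X => deriv (fun s => f (Function.update X i s)) (X i)

/-- Border a square matrix with one extra column, one extra row, and corner entry `0`. -/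
def bord {n : ℕ} (M : Matrix (Fin n) (Fin n) ℂ) (col row : Fin n → ℂ) :
    Matrix (Fin (n + 1)) (Fin (n + 1)) ℂ :=
  Matrix.of fun i j =>
    if hi : (i : ℕ) < n then
      if hj : (j : ℕ) < n then M ⟨i, hi⟩ ⟨j, hj⟩ else col ⟨i, hi⟩
    else if hj : (j : ℕ) < n then row ⟨j, hj⟩ else 0

/-- Border a square matrix with two extra columns `c1, c2`, two extra rows `r1, r2`,
and a `2×2` zero corner block. -/
def bord2 {n : ℕ} (M : Matrix (Fin n) (Fin n) ℂ) (c1 c2 r1 r2 : Fin n → ℂ) :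
    Matrix (Fin (n + 2)) (Fin (n + 2)) ℂ :=
  Matrix.of fun i j =>
    if hi : (i : ℕ) < n then
      if hj : (j : ℕ) < n then M ⟨i, hi⟩ ⟨j, hj⟩
      else if (j : ℕ) = n then c1 ⟨i, hi⟩ else c2 ⟨i, hi⟩
    else if hj : (j : ℕ) < n then
      (if (i : ℕ) = n then r1 ⟨j, hj⟩ else r2 ⟨j, hj⟩)
    else 0

/-- The data of the KP tau-function setting. -/
structure KPData (N : ℕ) where
  a : ℂ
  b : ℂ
  p : Fin N → ℂ
  pb : Fin N → ℂ
  q : Fin N → ℂ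
  qb : Fin N → ℂ
  r : Fin N → ℂ
  rb : Fin N → ℂ
  xi0 : Fin N → ℂ
  xib0 : Fin N → ℂ
  Ct : Fin N → ℂ
  Cb : Fin N → ℂ
  Dt : Fin N → ℂ
  Db : Fin N → ℂ

namespace KPData

variable {N : ℕ} (K : KPData N)

/-- The nondegeneracy assumptions of the KP tau-function setting. -/
def Nondeg : Prop :=
  K.a ≠ 0 ∧ K.b ≠ 0 ∧
  (∀ i, K.p i ≠ K.a ∧ K.p i ≠ K.b) ∧
  (∀ i, K.pb i ≠ -K.a ∧ K.pb i ≠ -K.b) ∧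
  (∀ i j, K.p i + K.pb j ≠ 0) ∧
  (∀ i j, K.q i + K.qb j ≠ 0) ∧
  (∀ i j, K.r i + K.rb j ≠ 0)

/-- The phase `ξ_i`. -/
def xi (i : Fin N) (X : Fin 7 → ℝ) : ℂ :=
  K.p i * (X 0 : ℂ) + (K.p i) ^ 2 * (X 1 : ℂ) + (K.p i) ^ 3 * (X 2 : ℂ)
    + (X 3 : ℂ) / (K.p i - K.a) + (X 4 : ℂ) / (K.p i - K.b) + K.xi0 i

/-- The phase `ξ̄_j`. -/
def xib (j : Fin N) (X : Fin 7 → ℝ) : ℂ :=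
  K.pb j * (X 0 : ℂ) - (K.pb j) ^ 2 * (X 1 : ℂ) + (K.pb j) ^ 3 * (X 2 : ℂ)
    + (X 3 : ℂ) / (K.pb j + K.a) + (X 4 : ℂ) / (K.pb j + K.b) + K.xib0 j

/-- The phase `η_i = q_i y₁⁽¹⁾`. -/
def eta (i : Fin N) (X : Fin 7 → ℝ) : ℂ := K.q i * (X 5 : ℂ)

/-- The phase `η̄_j = q̄_j y₁⁽¹⁾`. -/
def etab (j : Fin N) (X : Fin 7 → ℝ) : ℂ := K.qb j * (X 5 : ℂ)

/-- The phase `χ_i = r_i y₁⁽²⁾`. -/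
def chi (i : Fin N) (X : Fin 7 → ℝ) : ℂ := K.r i * (X 6 : ℂ)

/-- The phase `χ̄_j = r̄_j y₁⁽²⁾`. -/
def chib (j : Fin N) (X : Fin 7 → ℝ) : ℂ := K.rb j * (X 6 : ℂ)

/-- The matrix entry `m_{ij}^{k,l}` (with integer exponents `k, l`). -/
def ment (k l : ℤ) (i j : Fin N) (X : Fin 7 → ℝ) : ℂ :=
  (1 / (K.p i + K.pb j)) * (-((K.p i - K.a) / (K.pb j + K.a))) ^ k
      * (-((K.p i - K.b) / (K.pb j + K.b))) ^ l
      * Complex.exp (K.xi i X + K.xib j X)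
    + K.Ct i * K.Cb j * Complex.exp (K.eta i X + K.etab j X) / (K.q i + K.qb j)
    + K.Dt i * K.Db j * Complex.exp (K.chi i X + K.chib j X) / (K.r i + K.rb j)

/-- The vector entry `Φ_{k,l,i}`. -/
def phi (k l : ℤ) (i : Fin N) (X : Fin 7 → ℝ) : ℂ :=
  (1 - K.p i / K.a) ^ k * (1 - K.p i / K.b) ^ l * Complex.exp (K.xi i X)

/-- The vector entry `Φ̄_{k,l,i}`. -/
def phib (k l : ℤ) (i : Fin N) (X : Fin 7 → ℝ) : ℂ :=
  (1 + K.pb i / K.a) ^ (-k) * (1 + K.pb i / K.b) ^ (-l) * Complex.exp (K.xib i X)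

/-- The vector entry `Ψ_i`. -/
def psi (i : Fin N) (X : Fin 7 → ℝ) : ℂ := K.Ct i * Complex.exp (K.eta i X)

/-- The vector entry `Ψ̄_i`. -/
def psib (i : Fin N) (X : Fin 7 → ℝ) : ℂ := K.Cb i * Complex.exp (K.etab i X)

/-- The vector entry `Υ_i`. -/
def ups (i : Fin N) (X : Fin 7 → ℝ) : ℂ := K.Dt i * Complex.exp (K.chi i X)

/-- The vector entry `Ῡ_i`. -/
def upsb (i : Fin N) (X : Fin 7 → ℝ) : ℂ := K.Db i * Complex.exp (K.chib i X)

/-- `τ_{k,l}⁽⁰⁾ = det M_{k,l}`. -/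
def tau0 (k l : ℤ) (X : Fin 7 → ℝ) : ℂ :=
  (Matrix.of fun i j => K.ment k l i j X).det

/-- `τ_{k,l}⁽¹⁾`: bordered with column `Φ_{k,l}` and row `-Ψ̄ᵀ`. -/
def tau1 (k l : ℤ) (X : Fin 7 → ℝ) : ℂ :=
  (bord (Matrix.of fun i j => K.ment k l i j X)
    (fun i => K.phi k l i X) (fun j => -K.psib j X)).det

/-- `τ̄_{k,l}⁽¹⁾`: bordered with column `Ψ` and row `-Φ̄_{k,l}ᵀ`. -/
def tau1b (k l : ℤ) (X : Fin 7 → ℝ) : ℂ :=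
  (bord (Matrix.of fun i j => K.ment k l i j X)
    (fun i => K.psi i X) (fun j => -K.phib k l j X)).det

/-- `τ_{k,l}⁽²⁾`: bordered with column `Φ_{k,l}` and row `-Ῡᵀ`. -/
def tau2 (k l : ℤ) (X : Fin 7 → ℝ) : ℂ :=
  (bord (Matrix.of fun i j => K.ment k l i j X)
    (fun i => K.phi k l i X) (fun j => -K.upsb j X)).det

/-- `τ̄_{k,l}⁽²⁾`: bordered with column `Υ` and row `-Φ̄_{k,l}ᵀ`. -/
def tau2b (k l : ℤ) (X : Fin 7 → ℝ) : ℂ :=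
  (bord (Matrix.of fun i j => K.ment k l i j X)
    (fun i => K.ups i X) (fun j => -K.phib k l j X)).det

/-- `τ_{k,l}⁽¹'²⁾`: double-bordered with columns `Φ_{k,l}`, `∂_{x₁}Φ_{k,l}` and rows
`-Ῡᵀ`, `-Ψ̄ᵀ`. -/
def tau12 (k l : ℤ) (X : Fin 7 → ℝ) : ℂ :=
  (bord2 (Matrix.of fun i j => K.ment k l i j X)
    (fun i => K.phi k l i X)
    (fun i => pd 0 (fun Y => K.phi k l i Y) X)
    (fun j => -K.upsb j X)
    (fun j => -K.psib j X)).det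

end KPData

/-!
Every change of `M = M_{k,l}` that occurs in the identity has rank one, with columns `Φ_k`,
`Φ_{k-1}` and rows `Φ̄_k`, `Φ̄_{k+1}`:
`∂_{x₁} M = Φ_k Φ̄_kᵀ`, `∂_{x₋₁⁽¹⁾} M = -a⁻² Φ_{k-1} Φ̄_{k+1}ᵀ`,
`M_{k+1} = M - a⁻¹ Φ_k Φ̄_{k+1}ᵀ` and `M_{k-1} = M + a⁻¹ Φ_{k-1} Φ̄_kᵀ`.
By Jacobi's formula and the matrix determinant lemma all tau functions and their derivatives become
values of the form `vᵀ adj(M) u`, and the Toda-type equation reduces to Jacobi's identity for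
the `2 × 2` minors of the adjugate, which is the matrix determinant lemma for a rank-two change.
-/

section AdjugateForm

variable {m n R : Type*} [Fintype m] [DecidableEq m] [Fintype n] [DecidableEq n] [CommRing R]

theorem det_pow_card_mul_det_add_mul (A : Matrix n n R) (U : Matrix n m R) (V : Matrix m n R) :
    A.det ^ Fintype.card m * (A + U * V).det =
      A.det * (A.det • 1 + V * A.adjugate * U).det := by
  have hblock : fromBlocks A (-U) V 1 * fromBlocks 1 (A.adjugate * U) 0 (A.det • 1) =
      fromBlocks A 0 V (A.det • 1 + V * A.adjugate * U) := by
    simp [fromBlocks_multiply, ← Matrix.mul_assoc, mul_adjugate, add_comm]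
  have hdet := congrArg Matrix.det hblock
  rw [det_mul, det_fromBlocks_one₂₂, det_fromBlocks_zero₂₁, det_fromBlocks_zero₁₂] at hdet
  simpa [mul_comm] using hdet

theorem isRegular_det_map_C_add_X_smul_one (A : Matrix n n R) :
    IsRegular (A.map Polynomial.C + (Polynomial.X : Polynomial R) • 1).det := by
  apply Polynomial.Monic.isRegular
  rw [Polynomial.Monic.def, add_comm, Polynomial.leadingCoeff_det_X_one_add_C]

-- Over `R[X]` the determinant of `A + X • 1` is regular, so it can be cancelled there;
-- then set `X = 0`.
theorem det_pow_card_sub_one_mul_det_add_mul [Nonempty m] (A : Matrix n n R)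
    (U : Matrix n m R) (V : Matrix m n R) :
    A.det ^ (Fintype.card m - 1) * (A + U * V).det =
      (A.det • 1 + V * A.adjugate * U).det := by
  set A' : Matrix n n (Polynomial R) :=
    A.map Polynomial.C + (Polynomial.X : Polynomial R) • 1
  set U' := U.map (Polynomial.C : R →+* Polynomial R)
  set V' := V.map (Polynomial.C : R →+* Polynomial R)
  have hgeneric : A'.det ^ (Fintype.card m - 1) * (A' + U' * V').det =
      (A'.det • 1 + V' * A'.adjugate * U').det := by
    apply (isRegular_det_map_C_add_X_smul_one A).left
    simp only
    rw [← mul_assoc, ← pow_succ', Nat.sub_add_cancel Fintype.card_pos,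
      det_pow_card_mul_det_add_mul]
  have heval := congrArg (Polynomial.evalRingHom 0) hgeneric
  have hA : A'.map (Polynomial.evalRingHom 0) = A := by ext; simp [A']
  have hU : U'.map (Polynomial.evalRingHom 0) = U := by ext; simp [U']
  have hV : V'.map (Polynomial.evalRingHom 0) = V := by ext; simp [V']
  have hadj : A'.adjugate.map (Polynomial.evalRingHom 0) = A.adjugate := by
    rw [← RingHom.mapMatrix_apply, RingHom.map_adjugate, RingHom.mapMatrix_apply, hA]
  simpa only [map_mul, map_pow, RingHom.map_det, RingHom.mapMatrix_apply, Matrix.map_mul,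
    Matrix.map_add _ (map_add _), hA, hU, hV, hadj,
    Matrix.map_smul' _ _ _ (map_mul _), Matrix.map_one _ (map_zero _) (map_one _)] using heval

/-- The bilinear form `(v, u) ↦ vᵀ adj(A) u` of the adjugate of `A`. It is minus the determinant of
`A` bordered by the column `u`, the row `vᵀ` and the corner entry `0`. -/
def adjugateForm (A : Matrix n n R) : LinearMap.BilinForm R (n → R) :=
  A.adjugate.toBilin'

theorem adjugateForm_apply (A : Matrix n n R) (v u : n → R) :
    adjugateForm A v u = v ⬝ᵥ A.adjugate *ᵥ u :=
  toBilin'_apply' _ _ _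

theorem trace_adjugate_mul_vecMulVec (A : Matrix n n R) (u v : n → R) :
    (A.adjugate * vecMulVec u v).trace = adjugateForm A v u := by
  rw [adjugateForm_apply, mul_vecMulVec, trace_vecMulVec, dotProduct_comm]

theorem trace_adjugate_mul_eq_sum_det_updateCol (A B : Matrix n n R) :
    (A.adjugate * B).trace = ∑ j, (A.updateCol j (B.col j)).det := by
  simp_rw [← cramer_apply, cramer_eq_adjugate_mulVec]
  rfl

theorem det_add_vecMulVec (A : Matrix n n R) (u v : n → R) :
    (A + vecMulVec u v).det = A.det + adjugateForm A v u := by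
  have h := det_pow_card_sub_one_mul_det_add_mul A (replicateCol Unit u) (replicateRow Unit v)
  have hform : (replicateRow Unit v * A.adjugate * replicateCol Unit u) () () =
      adjugateForm A v u := by
    rw [adjugateForm_apply, Matrix.mul_assoc]
    rfl
  simpa [← vecMulVec_eq, hform] using h

theorem det_mul_det_add_vecMulVec_add_vecMulVec (A : Matrix n n R) (u v x y : n → R) :
    A.det * (A + vecMulVec u v + vecMulVec x y).det =
      (A.det + adjugateForm A v u) * (A.det + adjugateForm A y x) -
        adjugateForm A v x * adjugateForm A y u := by
  have h := det_pow_card_sub_one_mul_det_add_mul A (of ![u, x])ᵀ (of ![v, y])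
  have hrank : (of ![u, x])ᵀ * of ![v, y] = vecMulVec u v + vecMulVec x y := by
    ext i j
    simp [Matrix.mul_apply, vecMulVec_apply]
  have hform (a b : Fin 2) : (of ![v, y] * A.adjugate * (of ![u, x])ᵀ) a b =
      adjugateForm A (![v, y] a) (![u, x] b) := by
    rw [adjugateForm_apply, Matrix.mul_assoc]
    rfl
  rw [hrank, ← add_assoc, det_fin_two] at h
  simpa only [Matrix.add_apply, hform, Fintype.card_fin, Nat.add_one_sub_one, pow_one,
    Matrix.smul_apply, one_apply_eq, one_apply_ne zero_ne_one, one_apply_ne one_ne_zero,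
    smul_eq_mul, mul_one, mul_zero, zero_add, cons_val_zero, cons_val_one] using h

theorem det_mul_adjugateForm_add_vecMulVec (A : Matrix n n R) (u v x y : n → R) :
    A.det * adjugateForm (A + vecMulVec u v) y x =
      (A.det + adjugateForm A v u) * adjugateForm A y x -
        adjugateForm A v x * adjugateForm A y u := by
  have h := det_mul_det_add_vecMulVec_add_vecMulVec A u v x y
  rw [det_add_vecMulVec (A + vecMulVec u v), det_add_vecMulVec A] at h
  linear_combination h

theorem adjugateForm_add_vecMulVec_left (A : Matrix n n R) (u v w : n → R) :
    adjugateForm (A + vecMulVec u v) v w = adjugateForm A v w := by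
  have h := det_add_vecMulVec (A + vecMulVec u v) w v
  rw [add_assoc, ← add_vecMulVec, det_add_vecMulVec, det_add_vecMulVec, map_add] at h
  linear_combination -h

theorem adjugateForm_add_vecMulVec_right (A : Matrix n n R) (u v w : n → R) :
    adjugateForm (A + vecMulVec u v) w u = adjugateForm A w u := by
  have h := det_add_vecMulVec (A + vecMulVec u v) u w
  rw [add_assoc, ← vecMulVec_add, det_add_vecMulVec, det_add_vecMulVec, LinearMap.map_add₂] at h
  linear_combination -h

end AdjugateForm

section Derivative

variable {n 𝕜 𝔸 : Type*} [Fintype n] [DecidableEq n] [NontriviallyNormedField 𝕜]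
  [NormedCommRing 𝔸] [NormedAlgebra 𝕜 𝔸]

theorem hasDerivAt_det {A : 𝕜 → Matrix n n 𝔸} {A' : Matrix n n 𝔸} {t : 𝕜}
    (hA : ∀ i j, HasDerivAt (fun s => A s i j) (A' i j) t) :
    HasDerivAt (fun s => (A s).det) ((A t).adjugate * A').trace t := by
  have hLeibniz : HasDerivAt (fun s => (A s).det)
      (∑ σ : Equiv.Perm n, ((Equiv.Perm.sign σ : ℤ) : 𝔸) *
        ∑ j, (∏ i ∈ Finset.univ.erase j, A t (σ i) i) • A' (σ j) j) t := by
    simp only [det_apply']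
    exact HasDerivAt.fun_sum fun σ _ =>
      (HasDerivAt.fun_finsetProd fun j _ => hA (σ j) j).const_mul _
  convert hLeibniz using 1
  simp only [trace_adjugate_mul_eq_sum_det_updateCol, det_apply', Finset.mul_sum]
  rw [Finset.sum_comm]
  refine Finset.sum_congr rfl fun σ _ => Finset.sum_congr rfl fun j _ => ?_
  rw [← Finset.prod_erase_mul _ _ (Finset.mem_univ j), updateCol_self, smul_eq_mul, col_apply]
  congr 2
  exact Finset.prod_congr rfl fun i hi => by rw [updateCol_ne (Finset.ne_of_mem_erase hi)]

theorem hasDerivAt_det_of_vecMulVec {A : 𝕜 → Matrix n n 𝔸} {x y : n → 𝔸} {t : 𝕜}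
    (hA : ∀ i j, HasDerivAt (fun s => A s i j) (x i * y j) t) :
    HasDerivAt (fun s => (A s).det) (adjugateForm (A t) y x) t := by
  rw [← trace_adjugate_mul_vecMulVec]
  exact hasDerivAt_det hA

-- `vᵀ adj(A) u = det (A + u vᵀ) - det A`, so only determinants have to be differentiated.
theorem hasDerivAt_adjugateForm_of_vecMulVec {A : 𝕜 → Matrix n n 𝔸} {u v : 𝕜 → n → 𝔸}
    {u' v' x y : n → 𝔸} {t : 𝕜}
    (hA : ∀ i j, HasDerivAt (fun s => A s i j) (x i * y j) t)
    (hu : ∀ i, HasDerivAt (fun s => u s i) (u' i) t)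
    (hv : ∀ j, HasDerivAt (fun s => v s j) (v' j) t) :
    HasDerivAt (fun s => adjugateForm (A s) (v s) (u s))
      (adjugateForm (A t) (v t) u' + adjugateForm (A t) v' (u t) +
        (adjugateForm (A t + vecMulVec (u t) (v t)) y x - adjugateForm (A t) y x)) t := by
  have hrank : ∀ i j, HasDerivAt (fun s => (A s + vecMulVec (u s) (v s)) i j)
      ((vecMulVec x y + (vecMulVec u' (v t) + vecMulVec (u t) v')) i j) t :=
    fun i j => (hA i j).add ((hu i).mul (hv j))
  have hdiff := (hasDerivAt_det hrank).sub (hasDerivAt_det_of_vecMulVec hA)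
  simp only [Matrix.mul_add, trace_add, trace_adjugate_mul_vecMulVec,
    adjugateForm_add_vecMulVec_left, adjugateForm_add_vecMulVec_right] at hdiff
  have hform : (fun s => adjugateForm (A s) (v s) (u s)) =
      fun s => (A s + vecMulVec (u s) (v s)).det - (A s).det := by
    funext s
    rw [det_add_vecMulVec, add_sub_cancel_left]
  rw [hform]
  exact hdiff.congr_deriv (by ring)

end Derivative

/-- `HasPDerivAt d f c X` says that `f` has the partial derivative `c` in the `d`-th coordinate
direction at `X`; unlike an equation for `pd d f X` it includes the existence of the derivative. -/
def HasPDerivAt (d : Fin 7) (f : (Fin 7 → ℝ) → ℂ) (c : ℂ) (X : Fin 7 → ℝ) : Prop :=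
  HasDerivAt (fun s => f (Function.update X d s)) c (X d)

namespace HasPDerivAt

variable {d : Fin 7} {f : (Fin 7 → ℝ) → ℂ} {c : ℂ} {X : Fin 7 → ℝ}

theorem pd_eq (h : HasPDerivAt d f c X) : pd d f X = c :=
  HasDerivAt.deriv h

theorem of_affine {e : ℂ} (h : ∀ s : ℝ, f (Function.update X d s) = c * s + e) :
    HasPDerivAt d f c X := by
  have haffine : HasDerivAt (fun s : ℝ => c * (s : ℂ) + e) c (X d) := by
    simpa using (ofRealCLM.hasDerivAt.const_mul c).add_const e
  rwa [HasPDerivAt, funext h]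

theorem const_mul_cexp (h : HasPDerivAt d f c X) (e : ℂ) :
    HasPDerivAt d (fun Y => e * exp (f Y)) (c * (e * exp (f X))) X := by
  refine (HasDerivAt.const_mul e (HasDerivAt.cexp h)).congr_deriv ?_
  rw [Function.update_eq_self]
  ring

section Determinant

variable {n : Type*} [Fintype n] [DecidableEq n] {A : (Fin 7 → ℝ) → Matrix n n ℂ} {x y : n → ℂ}

theorem det_of_vecMulVec (hA : ∀ i j, HasPDerivAt d (fun Y => A Y i j) (x i * y j) X) :
    HasPDerivAt d (fun Y => (A Y).det) (adjugateForm (A X) y x) X := by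
  simpa [HasPDerivAt] using hasDerivAt_det_of_vecMulVec hA

theorem adjugateForm_of_vecMulVec {u v : (Fin 7 → ℝ) → n → ℂ} {u' v' : n → ℂ}
    (hA : ∀ i j, HasPDerivAt d (fun Y => A Y i j) (x i * y j) X)
    (hu : ∀ i, HasPDerivAt d (fun Y => u Y i) (u' i) X)
    (hv : ∀ j, HasPDerivAt d (fun Y => v Y j) (v' j) X) :
    HasPDerivAt d (fun Y => adjugateForm (A Y) (v Y) (u Y))
      (adjugateForm (A X) (v X) u' + adjugateForm (A X) v' (u X) +
        (adjugateForm (A X + vecMulVec (u X) (v X)) y x - adjugateForm (A X) y x)) X := by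
  simpa [HasPDerivAt] using hasDerivAt_adjugateForm_of_vecMulVec hA hu hv

end Determinant

end HasPDerivAt

namespace KPData

variable {N : ℕ} {K : KPData N}

theorem hasPDerivAt_xi_zero (i : Fin N) (X : Fin 7 → ℝ) :
    HasPDerivAt 0 (K.xi i) (K.p i) X :=
  .of_affine (e := K.xi i (Function.update X 0 0)) fun s => by
    simp only [xi, Function.update_self, Function.update_of_ne, ne_eq, Fin.reduceEq,
      not_false_eq_true, ofReal_zero]
    ring

theorem hasPDerivAt_xi_three (i : Fin N) (X : Fin 7 → ℝ) :
    HasPDerivAt 3 (K.xi i) (K.p i - K.a)⁻¹ X :=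
  .of_affine (e := K.xi i (Function.update X 3 0)) fun s => by
    simp only [xi, Function.update_self, Function.update_of_ne, ne_eq, Fin.reduceEq,
      not_false_eq_true, ofReal_zero]
    ring

theorem hasPDerivAt_xib_zero (j : Fin N) (X : Fin 7 → ℝ) :
    HasPDerivAt 0 (K.xib j) (K.pb j) X :=
  .of_affine (e := K.xib j (Function.update X 0 0)) fun s => by
    simp only [xib, Function.update_self, Function.update_of_ne, ne_eq, Fin.reduceEq,
      not_false_eq_true, ofReal_zero]
    ring

theorem hasPDerivAt_xib_three (j : Fin N) (X : Fin 7 → ℝ) :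
    HasPDerivAt 3 (K.xib j) (K.pb j + K.a)⁻¹ X :=
  .of_affine (e := K.xib j (Function.update X 3 0)) fun s => by
    simp only [xib, Function.update_self, Function.update_of_ne, ne_eq, Fin.reduceEq,
      not_false_eq_true, ofReal_zero]
    ring

theorem phi_add_one {i : Fin N} (hp : K.p i ≠ K.a) (k l : ℤ) (X : Fin 7 → ℝ) :
    K.phi (k + 1) l i X = (1 - K.p i / K.a) * K.phi k l i X := by
  have hbase : 1 - K.p i / K.a ≠ 0 := sub_ne_zero.2 fun h => hp (eq_of_div_eq_one h.symm)
  rw [phi, phi, zpow_add_one₀ hbase]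
  ring

theorem phi_eq_mul_phi_sub_one {i : Fin N} (hp : K.p i ≠ K.a) (k l : ℤ) (X : Fin 7 → ℝ) :
    K.phi k l i X = (1 - K.p i / K.a) * K.phi (k - 1) l i X := by
  rw [← phi_add_one hp, sub_add_cancel]

theorem phib_eq_mul_phib_add_one {j : Fin N} (hpb : K.pb j ≠ -K.a) (k l : ℤ)
    (X : Fin 7 → ℝ) :
    K.phib k l j X = (1 + K.pb j / K.a) * K.phib (k + 1) l j X := by
  have hbase : 1 + K.pb j / K.a ≠ 0 := fun h =>
    hpb (eq_of_div_eq_one (by rw [div_neg]; linear_combination -h))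
  have hk : -k = -(k + 1) + 1 := by ring
  rw [phib, phib, hk, zpow_add_one₀ hbase]
  ring

theorem hasPDerivAt_phi_zero (k l : ℤ) (i : Fin N) (X : Fin 7 → ℝ) :
    HasPDerivAt 0 (K.phi k l i) (K.p i * K.phi k l i X) X :=
  (hasPDerivAt_xi_zero i X).const_mul_cexp _

theorem hasPDerivAt_phib_zero (k l : ℤ) (j : Fin N) (X : Fin 7 → ℝ) :
    HasPDerivAt 0 (K.phib k l j) (K.pb j * K.phib k l j X) X :=
  (hasPDerivAt_xib_zero j X).const_mul_cexp _

theorem hasPDerivAt_phi_three {i : Fin N} (ha : K.a ≠ 0) (hp : K.p i ≠ K.a) (k l : ℤ)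
    (X : Fin 7 → ℝ) :
    HasPDerivAt 3 (K.phi k l i) (-K.a⁻¹ * K.phi (k - 1) l i X) X := by
  refine ((hasPDerivAt_xi_three i X).const_mul_cexp _).congr_deriv ?_
  change (K.p i - K.a)⁻¹ * K.phi k l i X = _
  rw [phi_eq_mul_phi_sub_one hp]
  have := sub_ne_zero.2 hp
  field_simp
  ring

theorem hasPDerivAt_phib_three {j : Fin N} (ha : K.a ≠ 0) (hpb : K.pb j ≠ -K.a) (k l : ℤ)
    (X : Fin 7 → ℝ) :
    HasPDerivAt 3 (K.phib k l j) (K.a⁻¹ * K.phib (k + 1) l j X) X := by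
  refine ((hasPDerivAt_xib_three j X).const_mul_cexp _).congr_deriv ?_
  change (K.pb j + K.a)⁻¹ * K.phib k l j X = _
  rw [phib_eq_mul_phib_add_one hpb]
  have : K.pb j + K.a ≠ 0 := fun h => hpb (eq_neg_of_add_eq_zero_left h)
  field_simp
  ring

/-- The part of the matrix entries `m_{ij}^{k,l}` that depends only on the auxiliary variables
`y₁⁽¹⁾`, `y₁⁽²⁾`. -/
def auxEntry (K : KPData N) (i j : Fin N) (X : Fin 7 → ℝ) : ℂ :=
  K.Ct i * K.Cb j * exp (K.eta i X + K.etab j X) / (K.q i + K.qb j)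
    + K.Dt i * K.Db j * exp (K.chi i X + K.chib j X) / (K.r i + K.rb j)

theorem auxEntry_update {d : Fin 7} (h5 : 5 ≠ d) (h6 : 6 ≠ d) (i j : Fin N) (X : Fin 7 → ℝ)
    (s : ℝ) : K.auxEntry i j (Function.update X d s) = K.auxEntry i j X := by
  simp only [auxEntry, eta, etab, chi, chib, Function.update_of_ne h5, Function.update_of_ne h6]

theorem ment_eq_phi_mul_phib_div_add_auxEntry (ha : K.a ≠ 0) (hb : K.b ≠ 0) (k l : ℤ)
    (i j : Fin N) (X : Fin 7 → ℝ) :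
    K.ment k l i j X =
      K.phi k l i X * K.phib k l j X / (K.p i + K.pb j) + K.auxEntry i j X := by
  have hratio {c : ℂ} (hc : c ≠ 0) (m : ℤ) : (-((K.p i - c) / (K.pb j + c))) ^ m =
      (1 - K.p i / c) ^ m * (1 + K.pb j / c) ^ (-m) := by
    rw [_root_.zpow_neg, ← div_eq_mul_inv, ← div_zpow, one_sub_div hc, one_add_div hc,
      div_div_div_cancel_right₀ hc, ← neg_div, neg_sub, add_comm c]
  rw [ment, hratio ha, hratio hb, exp_add, phi, phib, auxEntry]
  ring

theorem hasPDerivAt_ment {d : Fin 7} (h5 : 5 ≠ d) (h6 : 6 ≠ d) (ha : K.a ≠ 0) (hb : K.b ≠ 0)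
    {k l : ℤ} {i j : Fin N} {X : Fin 7 → ℝ} {φ' φb' : ℂ}
    (hphi : HasPDerivAt d (K.phi k l i) φ' X) (hphib : HasPDerivAt d (K.phib k l j) φb' X) :
    HasPDerivAt d (K.ment k l i j)
      ((φ' * K.phib k l j X + K.phi k l i X * φb') / (K.p i + K.pb j)) X := by
  simp only [HasPDerivAt, ment_eq_phi_mul_phib_div_add_auxEntry ha hb, auxEntry_update h5 h6]
  simpa using ((HasDerivAt.mul hphi hphib).div_const (K.p i + K.pb j)).add_const
    (K.auxEntry i j X)

theorem hasPDerivAt_ment_zero {i j : Fin N} (ha : K.a ≠ 0) (hb : K.b ≠ 0)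
    (hpp : K.p i + K.pb j ≠ 0) (k l : ℤ) (X : Fin 7 → ℝ) :
    HasPDerivAt 0 (K.ment k l i j) (K.phi k l i X * K.phib k l j X) X := by
  refine (hasPDerivAt_ment (by decide) (by decide) ha hb (hasPDerivAt_phi_zero k l i X)
    (hasPDerivAt_phib_zero k l j X)).congr_deriv ?_
  field_simp

theorem hasPDerivAt_ment_three {i j : Fin N} (ha : K.a ≠ 0) (hb : K.b ≠ 0) (hp : K.p i ≠ K.a)
    (hpb : K.pb j ≠ -K.a) (hpp : K.p i + K.pb j ≠ 0) (k l : ℤ) (X : Fin 7 → ℝ) :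
    HasPDerivAt 3 (K.ment k l i j)
      (-K.a⁻¹ * K.phi (k - 1) l i X * (K.a⁻¹ * K.phib (k + 1) l j X)) X := by
  refine (hasPDerivAt_ment (by decide) (by decide) ha hb (hasPDerivAt_phi_three ha hp k l X)
    (hasPDerivAt_phib_three ha hpb k l X)).congr_deriv ?_
  rw [phi_eq_mul_phi_sub_one hp k, phib_eq_mul_phib_add_one hpb k]
  field_simp
  ring

theorem ment_add_one {i j : Fin N} (ha : K.a ≠ 0) (hb : K.b ≠ 0) (hp : K.p i ≠ K.a)
    (hpb : K.pb j ≠ -K.a) (hpp : K.p i + K.pb j ≠ 0) (k l : ℤ) (X : Fin 7 → ℝ) :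
    K.ment (k + 1) l i j X =
      K.ment k l i j X - K.a⁻¹ * (K.phi k l i X * K.phib (k + 1) l j X) := by
  rw [ment_eq_phi_mul_phib_div_add_auxEntry ha hb, ment_eq_phi_mul_phib_div_add_auxEntry ha hb,
    phi_add_one hp, phib_eq_mul_phib_add_one hpb k]
  field_simp
  ring

/-- The matrix `M_{k,l}` at `X`, whose determinant is `τ_{k,l}⁽⁰⁾`. -/
def mat (K : KPData N) (k l : ℤ) (X : Fin 7 → ℝ) : Matrix (Fin N) (Fin N) ℂ :=
  of fun i j => K.ment k l i j X

/-- The vector `Φ_{k,l}` at `X`: the column factor of the rank-one changes of `M_{k,l}`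
under shifts of `k` and derivatives. -/
def phiVec (K : KPData N) (k l : ℤ) (X : Fin 7 → ℝ) : Fin N → ℂ :=
  fun i => K.phi k l i X

/-- The vector `Φ̄_{k,l}` at `X`: the row factor of the rank-one changes of `M_{k,l}`
under shifts of `k` and derivatives. -/
def phibVec (K : KPData N) (k l : ℤ) (X : Fin 7 → ℝ) : Fin N → ℂ :=
  fun j => K.phib k l j X

theorem tau0_eq_det_mat (k l : ℤ) (X : Fin 7 → ℝ) : K.tau0 k l X = (K.mat k l X).det :=
  rfl

theorem mat_add_one (hK : K.Nondeg) (k l : ℤ) (X : Fin 7 → ℝ) :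
    K.mat (k + 1) l X =
      K.mat k l X + vecMulVec (K.phiVec k l X) (-K.a⁻¹ • K.phibVec (k + 1) l X) := by
  obtain ⟨ha, hb, hp, hpb, hpp, -, -⟩ := hK
  ext i j
  change K.ment (k + 1) l i j X =
    K.ment k l i j X + K.phi k l i X * (-K.a⁻¹ * K.phib (k + 1) l j X)
  rw [ment_add_one ha hb (hp i).1 (hpb j).1 (hpp i j)]
  ring

theorem mat_sub_one (hK : K.Nondeg) (k l : ℤ) (X : Fin 7 → ℝ) :
    K.mat (k - 1) l X =
      K.mat k l X + vecMulVec (K.phiVec (k - 1) l X) (K.a⁻¹ • K.phibVec k l X) := by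
  have h := mat_add_one hK (k - 1) l X
  rw [sub_add_cancel] at h
  rw [h, add_assoc, ← vecMulVec_add, neg_smul, neg_add_cancel, vecMulVec_zero, add_zero]

theorem tau0_add_one (hK : K.Nondeg) (k l : ℤ) (X : Fin 7 → ℝ) :
    K.tau0 (k + 1) l X = K.tau0 k l X -
      K.a⁻¹ * adjugateForm (K.mat k l X) (K.phibVec (k + 1) l X) (K.phiVec k l X) := by
  rw [tau0_eq_det_mat, mat_add_one hK, det_add_vecMulVec, LinearMap.map_smul₂, smul_eq_mul,
    neg_mul, ← sub_eq_add_neg, tau0_eq_det_mat]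

theorem tau0_sub_one (hK : K.Nondeg) (k l : ℤ) (X : Fin 7 → ℝ) :
    K.tau0 (k - 1) l X = K.tau0 k l X +
      K.a⁻¹ * adjugateForm (K.mat k l X) (K.phibVec k l X) (K.phiVec (k - 1) l X) := by
  rw [tau0_eq_det_mat, mat_sub_one hK, det_add_vecMulVec, LinearMap.map_smul₂, smul_eq_mul,
    tau0_eq_det_mat]

theorem pd_zero_tau0 (hK : K.Nondeg) (k l : ℤ) :
    pd 0 (K.tau0 k l) =
      fun X => adjugateForm (K.mat k l X) (K.phibVec k l X) (K.phiVec k l X) := by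
  obtain ⟨ha, hb, -, -, hpp, -, -⟩ := hK
  funext X
  exact (HasPDerivAt.det_of_vecMulVec (A := K.mat k l) fun i j =>
    hasPDerivAt_ment_zero ha hb (hpp i j) k l X).pd_eq

theorem hasPDerivAt_mat_three (hK : K.Nondeg) (k l : ℤ) (X : Fin 7 → ℝ) (i j : Fin N) :
    HasPDerivAt 3 (fun Y => K.mat k l Y i j)
      ((-K.a⁻¹ • K.phiVec (k - 1) l X) i * (K.a⁻¹ • K.phibVec (k + 1) l X) j) X := by
  obtain ⟨ha, hb, hp, hpb, hpp, -, -⟩ := hK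
  exact hasPDerivAt_ment_three ha hb (hp i).1 (hpb j).1 (hpp i j) k l X

theorem pd_three_tau0 (hK : K.Nondeg) (k l : ℤ) (X : Fin 7 → ℝ) :
    pd 3 (K.tau0 k l) X = -(K.a⁻¹ ^ 2 *
      adjugateForm (K.mat k l X) (K.phibVec (k + 1) l X) (K.phiVec (k - 1) l X)) := by
  refine (HasPDerivAt.det_of_vecMulVec (hasPDerivAt_mat_three hK k l X)).pd_eq.trans ?_
  rw [map_smul, LinearMap.map_smul₂, smul_eq_mul, smul_eq_mul]
  ring

theorem pd_three_pd_zero_tau0 (hK : K.Nondeg) (k l : ℤ) (X : Fin 7 → ℝ) :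
    pd 3 (pd 0 (K.tau0 k l)) X =
      K.a⁻¹ * (adjugateForm (K.mat k l X) (K.phibVec (k + 1) l X) (K.phiVec k l X) -
        adjugateForm (K.mat k l X) (K.phibVec k l X) (K.phiVec (k - 1) l X)) -
      K.a⁻¹ ^ 2 * (adjugateForm
          (K.mat k l X + vecMulVec (K.phiVec k l X) (K.phibVec k l X))
          (K.phibVec (k + 1) l X) (K.phiVec (k - 1) l X) -
        adjugateForm (K.mat k l X) (K.phibVec (k + 1) l X) (K.phiVec (k - 1) l X)) := by
  have hphi (i : Fin N) : HasPDerivAt 3 (fun Y => K.phiVec k l Y i)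
      ((-K.a⁻¹ • K.phiVec (k - 1) l X) i) X :=
    hasPDerivAt_phi_three hK.1 (hK.2.2.1 i).1 k l X
  have hphib (j : Fin N) : HasPDerivAt 3 (fun Y => K.phibVec k l Y j)
      ((K.a⁻¹ • K.phibVec (k + 1) l X) j) X :=
    hasPDerivAt_phib_three hK.1 (hK.2.2.2.1 j).1 k l X
  rw [pd_zero_tau0 hK,
    (HasPDerivAt.adjugateForm_of_vecMulVec (hasPDerivAt_mat_three hK k l X) hphi hphib).pd_eq]
  simp only [map_smul, LinearMap.smul_apply, smul_eq_mul]
  ring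

end KPData

theorem stmt17 {N : ℕ} (hN : 1 ≤ N) (K : KPData N) (hnd : K.Nondeg) :
    ∀ (k l : ℤ) (X : Fin 7 → ℝ),
      2 * (pd 3 (pd 0 (K.tau0 k l)) X * K.tau0 k l X
            - pd 3 (K.tau0 k l) X * pd 0 (K.tau0 k l) X)
        - 2 * (K.tau0 k l X) ^ 2
        = -2 * (K.tau0 (k + 1) l X * K.tau0 (k - 1) l X) := by
  intro k l X
  have hjacobi := det_mul_adjugateForm_add_vecMulVec (K.mat k l X) (K.phiVec k l X)
    (K.phibVec k l X) (K.phiVec (k - 1) l X) (K.phibVec (k + 1) l X)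
  rw [← KPData.tau0_eq_det_mat] at hjacobi
  rw [KPData.tau0_add_one hnd, KPData.tau0_sub_one hnd, KPData.pd_three_pd_zero_tau0 hnd,
    KPData.pd_three_tau0 hnd, KPData.pd_zero_tau0 hnd]
  linear_combination -2 * K.a⁻¹ ^ 2 * hjacobi

end
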